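/- For every integer n >= 3, the word X A X^n A X is not universal: there exist a uniquely divisible group G and elements a, b in G such that the equation x * a * x^n * a * x = b has no solution x in G. -/

import Mathlib

/-- A group is *uniquely divisible* if every element has a unique `m`-th root
for each positive integer `m`. -/
def UniquelyDivisible (G : Type*) [Group G] : Prop :=
  ∀ (b : G) (m : ℕ), 0 < m → ∃! x : G, x ^ m = b

/-!
A root `α ∈ ℂ` of `1 + n z + z²` is not a root of unity when `|n| ≥ 3`, so the powers `αᵗ` define
an injective character of `ℚ`. Through it `ℚ` acts on `ℂ`; the semidirect product `ℂ ⋊ ℚ` is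
uniquely divisible because taking an `m`-th power acts on the fibre over `t` as multiplication by
the geometric sum `1 + αᵗ + ⋯ + α^((m-1)t)`, which never vanishes. For `a = (0, 1)`, a solution
`x` of `x a xⁿ a x = (w, 2)` must lie in `ℂ`, where the left-hand side is
`((1 + n α + α²) x, 2) = (0, 2)`, so there is none when `w ≠ 0`.
-/

open Finset SemidirectProduct

theorem UniquelyDivisible.isMulTorsionFree {G : Type*} [Group G] (hG : UniquelyDivisible G) :
    IsMulTorsionFree G where
  pow_left_injective m hm x _ hxy := (hG (x ^ m) m (Nat.pos_of_ne_zero hm)).unique rfl hxy.symm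

theorem uniquelyDivisible_multiplicative (V : Type*) [AddCommGroup V] [Module ℚ V] :
    UniquelyDivisible (Multiplicative V) := by
  intro b m hm
  have hm' : (m : ℚ) ≠ 0 := by exact_mod_cast hm.ne'
  have pow_eq_iff (x : Multiplicative V) : x ^ m = b ↔ (m : ℚ) • x.toAdd = b.toAdd := by
    rw [Nat.cast_smul_eq_nsmul, ← toAdd_pow, EmbeddingLike.apply_eq_iff_eq]
  refine ⟨.ofAdd ((m : ℚ)⁻¹ • b.toAdd), (pow_eq_iff _).2 (smul_inv_smul₀ hm' _), fun y hy => ?_⟩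
  rw [← (pow_eq_iff y).1 hy, inv_smul_smul₀ hm', ofAdd_toAdd]

section SemidirectProduct

variable {N H : Type*}

theorem semidirectProduct_right_pow [Group N] [Group H] {φ : H →* MulAut N} (x : N ⋊[φ] H)
    (m : ℕ) : (x ^ m).right = x.right ^ m :=
  map_pow rightHom x m

theorem semidirectProduct_left_pow [CommGroup N] [Group H] {φ : H →* MulAut N} (x : N ⋊[φ] H)
    (m : ℕ) : (x ^ m).left = ∏ k ∈ range m, φ (x.right ^ k) x.left := by
  induction m with
  | zero => simp
  | succ m ih => rw [pow_succ, mul_left, ih, semidirectProduct_right_pow, prod_range_succ]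

theorem UniquelyDivisible.semidirectProduct [CommGroup N] [Group H] {φ : H →* MulAut N}
    (hH : UniquelyDivisible H)
    (hφ : ∀ (h : H) (m : ℕ), 0 < m →
      Function.Bijective fun v : N => ∏ k ∈ range m, φ (h ^ k) v) :
    UniquelyDivisible (N ⋊[φ] H) := by
  intro b m hm
  obtain ⟨h, hh, h_unique⟩ := hH b.right m hm
  obtain ⟨v, hv, v_unique⟩ := (hφ h m hm).existsUnique b.left
  refine ⟨⟨v, h⟩, SemidirectProduct.ext ?_ ?_, fun y hy => ?_⟩
  · rw [semidirectProduct_left_pow, hv]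
  · rw [semidirectProduct_right_pow, hh]
  · have y_right : y.right = h := h_unique _ (by simp only [← semidirectProduct_right_pow, hy])
    have y_left : y.left = v :=
      v_unique _ (by simp only [← y_right, ← semidirectProduct_left_pow, hy])
    exact SemidirectProduct.ext y_left y_right

theorem exists_left_mul_eq_of_word_eq [Group N] [CommGroup H] [IsMulTorsionFree H]
    {φ : H →* MulAut N} {n : ℤ} (hn : n ≠ -2) {q : H} {w : N} {x : N ⋊[φ] H}
    (hx : x * inr q * x ^ n * inr q * x = inl w * inr (q ^ 2)) :
    ∃ v : N, v * φ q (v ^ n) * φ (q ^ 2) v = w := by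
  have right_zpow : x.right ^ (n + 2) = 1 := by
    have h := congrArg rightHom hx
    simp only [map_mul, map_zpow, rightHom_inr, rightHom_inl, rightHom_eq_right] at h
    refine mul_right_cancel (b := q ^ 2) ?_
    rw [← h, zpow_add, zpow_ofNat, pow_two, pow_two]
    ac_rfl
  have right_eq : x.right = 1 :=
    (IsMulTorsionFree.zpow_eq_one_iff_left (by lia)).1 right_zpow
  obtain ⟨v, rfl⟩ : ∃ v, x = inl v := ⟨x.left, SemidirectProduct.ext rfl right_eq⟩
  refine ⟨v, ?_⟩
  simpa [← map_zpow, pow_two] using congrArg SemidirectProduct.left hx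

end SemidirectProduct

theorem geom_sum_ne_zero_of_pow_eq_one_imp {R : Type*} [Ring R] [CharZero R] {z : R} {m : ℕ}
    (hm : m ≠ 0) (hz : z ^ m = 1 → z = 1) : ∑ k ∈ range m, z ^ k ≠ 0 := by
  intro hsum
  have hz1 : z = 1 := hz <| by rw [← sub_eq_zero, ← geom_sum_mul, hsum, zero_mul]
  simp [hz1, hm] at hsum

section ScalarAction

variable {K H : Type*}

/-- The action of a group `H` on the additive group of `K` by multiplication through a character
`χ : H →* Kˣ`. The additive group is written multiplicatively, as `SemidirectProduct` requires. -/
def scalarAction [Ring K] [Group H] (χ : H →* Kˣ) : H →* MulAut (Multiplicative K) :=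
  (MulAutMultiplicative K).symm.toMonoidHom.comp ((DistribMulAction.toAddAut Kˣ K).comp χ)

@[simp]
theorem toAdd_scalarAction [Ring K] [Group H] (χ : H →* Kˣ) (h : H) (v : Multiplicative K) :
    (scalarAction χ h v).toAdd = χ h * v.toAdd :=
  rfl

theorem toAdd_prod_scalarAction [Ring K] [Group H] (χ : H →* Kˣ) (h : H) (m : ℕ)
    (v : Multiplicative K) :
    (∏ k ∈ range m, scalarAction χ (h ^ k) v).toAdd = (∑ k ∈ range m, (χ h : K) ^ k) * v.toAdd := by
  simp only [toAdd_prod, toAdd_scalarAction, map_pow χ, Units.val_pow_eq_pow_val, sum_mul]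

theorem UniquelyDivisible.semidirectProduct_scalarAction [DivisionRing K] [CharZero K] [Group H]
    (hH : UniquelyDivisible H) {χ : H →* Kˣ} (hχ : Function.Injective χ) :
    UniquelyDivisible (Multiplicative K ⋊[scalarAction χ] H) := by
  have := hH.isMulTorsionFree
  refine hH.semidirectProduct fun h m hm => ?_
  have hsum : ∑ k ∈ range m, (χ h : K) ^ k ≠ 0 := by
    refine geom_sum_ne_zero_of_pow_eq_one_imp hm.ne' fun hpow => ?_
    have h_pow : h ^ m = 1 := hχ <| Units.ext <| by simpa using hpow
    simp [(pow_eq_one_iff_left hm.ne').1 h_pow]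
  refine (Multiplicative.toAdd.comp_bijective _).1 ?_
  simp only [Function.comp_def, toAdd_prod_scalarAction]
  exact (mulLeft_bijective₀ _ hsum).comp Multiplicative.toAdd.bijective

theorem not_exists_word_eq_of_root [Ring K] [CommGroup H] [IsMulTorsionFree H] {χ : H →* Kˣ}
    {n : ℤ} (hn : n ≠ -2) {q : H} (hq : 1 + n * (χ q : K) + (χ q : K) ^ 2 = 0)
    {w : Multiplicative K} (hw : w ≠ 1) :
    ¬ ∃ x : Multiplicative K ⋊[scalarAction χ] H,
      x * inr q * x ^ n * inr q * x = inl w * inr (q ^ 2) := by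
  rintro ⟨x, hx⟩
  obtain ⟨v, rfl⟩ := exists_left_mul_eq_of_word_eq hn hx
  refine hw (Multiplicative.toAdd.injective ?_)
  calc v.toAdd + χ q * (n • v.toAdd) + (χ (q ^ 2) : Kˣ) * v.toAdd
      = (1 + n * (χ q : K) + (χ q : K) ^ 2) * v.toAdd := by
        rw [map_pow, Units.val_pow_eq_pow_val, zsmul_eq_mul, ← mul_assoc, ← Int.cast_comm]
        noncomm_ring
    _ = 0 := by rw [hq, zero_mul]

end ScalarAction

/-- The character `t ↦ αᵗ` of the additive group of `ℚ`, given by the principal branch of the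
complex power. -/
noncomputable def ratPowHom (α : ℂˣ) : Multiplicative ℚ →* ℂˣ :=
  MonoidHom.toHomUnits
    { toFun t := (α : ℂ) ^ (t.toAdd : ℂ)
      map_one' := by simp
      map_mul' s t := by simp [Complex.cpow_add _ _ α.ne_zero] }

theorem ratPowHom_zpow (α : ℂˣ) (k : ℤ) : ratPowHom α (.ofAdd (k : ℚ)) = α ^ k :=
  Units.ext <| by simp [ratPowHom]

theorem ratPowHom_injective {α : ℂˣ} (hα : ¬ IsOfFinOrder α) :
    Function.Injective (ratPowHom α) := by
  refine (injective_iff_map_eq_one _).2 fun t ht => ?_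
  have ofAdd_num : Multiplicative.ofAdd (t.toAdd.num : ℚ) = t ^ t.toAdd.den := by
    rw [← Rat.mul_den_eq_num]
    exact congrArg Multiplicative.ofAdd (by simp [mul_comm])
  have zpow_num : α ^ t.toAdd.num = α ^ (0 : ℤ) := by
    rw [← ratPowHom_zpow, ofAdd_num, map_pow, ht, one_pow, zpow_zero]
  exact Multiplicative.toAdd.injective
    (Rat.num_eq_zero.1 (injective_zpow_iff_not_isOfFinOrder.2 hα zpow_num))

theorem norm_ne_one_of_root {K : Type*} [NormedDivisionRing K] {s z : K} (hs : 2 < ‖s‖)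
    (hz : 1 + s * z + z ^ 2 = 0) : ‖z‖ ≠ 1 := by
  intro hz1
  have hsz : s * z = -(1 + z ^ 2) := by rw [eq_neg_iff_add_eq_zero, ← hz]; abel
  have : ‖s‖ ≤ 2 := calc
    ‖s‖ = ‖s * z‖ := by rw [norm_mul, hz1, mul_one]
    _ = ‖1 + z ^ 2‖ := by rw [hsz, norm_neg]
    _ ≤ ‖(1 : K)‖ + ‖z ^ 2‖ := norm_add_le _ _
    _ = 2 := by rw [norm_one, norm_pow, hz1]; norm_num
  exact hs.not_ge this

theorem exists_root_not_isOfFinOrder {s : ℂ} (hs : 2 < ‖s‖) :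
    ∃ α : ℂˣ, 1 + s * α + (α : ℂ) ^ 2 = 0 ∧ ¬ IsOfFinOrder α := by
  obtain ⟨z, hz⟩ := exists_quadratic_eq_zero one_ne_zero
    (IsAlgClosed.exists_eq_mul_self (discrim 1 s 1))
  have hroot : 1 + s * z + z ^ 2 = 0 := by linear_combination hz
  have hz0 : z ≠ 0 := by
    rintro rfl
    simp at hroot
  exact ⟨.mk0 z hz0, hroot, fun hfin => norm_ne_one_of_root hs hroot
    ((Units.coeHom ℂ).isOfFinOrder hfin).norm_eq_one⟩

theorem stmt9_general (n : ℤ) (hn : 3 ≤ |n|) :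
    ∃ (G : Type) (_ : Group G), UniquelyDivisible G ∧
      ∃ a b : G, ¬ ∃ x : G, x * a * x ^ n * a * x = b := by
  have hs : 2 < ‖(n : ℂ)‖ := by
    rw [Complex.norm_intCast]
    exact_mod_cast hn
  obtain ⟨α, hroot, hα⟩ := exists_root_not_isOfFinOrder hs
  have hℚ := uniquelyDivisible_multiplicative ℚ
  have := hℚ.isMulTorsionFree
  let q : Multiplicative ℚ := .ofAdd ((1 : ℤ) : ℚ)
  have hq : ratPowHom α q = α := by rw [ratPowHom_zpow, zpow_one]
  refine ⟨Multiplicative ℂ ⋊[scalarAction (ratPowHom α)] Multiplicative ℚ, inferInstance,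
    hℚ.semidirectProduct_scalarAction (ratPowHom_injective hα),
    inr q, inl (.ofAdd 1) * inr (q ^ 2), ?_⟩
  have hn2 : n ≠ -2 := by
    rintro rfl
    norm_num at hn
  exact not_exists_word_eq_of_root hn2 (by rwa [hq]) (ofAdd_eq_one.not.2 one_ne_zero)

/-- For every integer `n ≥ 3`, the word `X A Xⁿ A X` is not universal:
there are a uniquely divisible group `G` and `a b : G` such that
`x a xⁿ a x = b` has no solution `x : G`. -/
theorem stmt9 (n : ℕ) (hn : 3 ≤ n) :
    ∃ (G : Type) (_ : Group G), UniquelyDivisible G ∧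
      ∃ a b : G, ¬ ∃ x : G, x * a * x ^ n * a * x = b := by
  simpa only [zpow_natCast] using stmt9_general n (by simpa using mod_cast hn)
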